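/- Let Γ be a group, let Γ ≅ Γ₁ * Γ₂ be a free product decomposition, and suppose Γ is the fundamental group of a closed orientable surface of genus g ≥ 0 modulo adding torsion relations (i.e., Γ has a presentation with generators α₁,...,α_g, β₁,...,β_g, γ₁,...,γ_{t+s} and relations γᵢ^{mᵢ} = 1 for i ≤ t and [α₁,β₁]⋯[α_g,β_g]γ₁⋯γ_{t+s} = 1), with each γᵢ lying in Γ₁ or Γ₂. Then Γ₁ or Γ₂ is isomorphic to a free product of cyclic groups. -/

import Mathlib

/-- The standard relations of a Fuchsian group of signature `(g; m₁,…,m_t; s)`: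
`γᵢ^{mᵢ} = 1` for `i ≤ t` and `[α₁,β₁]⋯[α_g,β_g]γ₁⋯γ_{t+s} = 1`. -/
def surfaceRels (g t s : ℕ) (m : Fin t → ℕ) :
    Set (FreeGroup (Fin g ⊕ Fin g ⊕ Fin (t + s))) :=
  {r | (∃ i : Fin t, r = FreeGroup.of (Sum.inr (Sum.inr (Fin.castAdd s i))) ^ m i) ∨
    r = (List.ofFn fun i : Fin g =>
          FreeGroup.of (Sum.inl i) * FreeGroup.of (Sum.inr (Sum.inl i)) *
            (FreeGroup.of (Sum.inl i))⁻¹ * (FreeGroup.of (Sum.inr (Sum.inl i)))⁻¹).prod *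
      (List.ofFn fun i : Fin (t + s) => FreeGroup.of (Sum.inr (Sum.inr i))).prod}

/-- A group is a free product of cyclic groups. -/
def IsFreeProductOfCyclicGroups (Γ₁ : Type*) [Group Γ₁] : Prop :=
  ∃ (ι : Type) (H : ι → Type) (inst : ∀ i, Group (H i)),
    (∀ i, letI := inst i; IsCyclic (H i)) ∧
    (letI : ∀ i, Monoid (H i) := fun i => (inst i).toMonoid
     Nonempty (Γ₁ ≃* Monoid.CoprodI H))

/-!
In the mirror image of a system of loops the two loops of each handle are swapped and every loop is
inverted and conjugated, in such a way that the surface word is inverted. The mirror images of the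
standard generators generate again and, in suitable coordinates `w`, a cochain on them that is
principal on the boundary loops satisfies the surface relation if and only if
`∑ (z⁻¹ - 1) • w z = 0`, the sum running over the original generators `z`. This is an explicit form
of Poincaré–Lefschetz duality: pairing the resulting cocycle with a group-ring valued cocycle `D`
that is principal on every boundary loop gives `∑ D z • w z = 0`. Taking for `w` the universal
solution yields `D z = v * (z⁻¹ - 1)` for a single `v`, so `D` is a coboundary.

A splitting `Γ₁ * Γ₂` with every boundary loop conjugate into a factor provides such a `D`, namely
zero on `Γ₁` and `y ↦ y⁻¹ - 1` on `Γ₂`. If it is a coboundary and `x ∈ Γ₁`, `y ∈ Γ₂`, then `y - 1`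
is a left multiple of `x * y - 1`, so `y` fixes every point fixed by `x * y` in every permutation
action. For nontrivial `x` and `y` an action of the free product on `Γ₁ × Γ₂` violates this.
-/

universe u

open groupCohomology
open scoped commutatorElement MonoidAlgebra

section Cocycles

variable {k G : Type u} {A : Type*} [CommRing k] [Group G] [AddCommGroup A] [Module k A]
  {ρ : Representation k G A} {f : G → A}

theorem mem_cocycles₁_of_iff :
    f ∈ cocycles₁ (Rep.of ρ) ↔ ∀ x y, f (x * y) = f x + ρ x (f y) := by
  simp only [mem_cocycles₁_iff (A := Rep.of ρ), add_comm (f _)]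

theorem cocycle_map_mul (hf : f ∈ cocycles₁ (Rep.of ρ)) (x y : G) :
    f (x * y) = f x + ρ x (f y) :=
  mem_cocycles₁_of_iff.1 hf x y

theorem cocycle_map_one (hf : f ∈ cocycles₁ (Rep.of ρ)) : f 1 = 0 :=
  cocycles₁_map_one (A := Rep.of ρ) ⟨f, hf⟩

theorem cocycle_map_inv (hf : f ∈ cocycles₁ (Rep.of ρ)) (x : G) : f x⁻¹ = -ρ x⁻¹ (f x) := by
  rw [eq_neg_iff_add_eq_zero, ← cocycle_map_mul hf, inv_mul_cancel, cocycle_map_one hf]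

theorem cocycle_map_commutator (hf : f ∈ cocycles₁ (Rep.of ρ)) (x y : G) :
    f ⁅x, y⁆ = f x + ρ x (f y) - ρ (x * y * x⁻¹) (f x) - ρ ⁅x, y⁆ (f y) := by
  simp only [commutatorElement_def, cocycle_map_mul hf, cocycle_map_inv hf, map_neg, map_mul,
    Module.End.mul_apply]
  abel

theorem cocycle_map_partialProd (hf : f ∈ cocycles₁ (Rep.of ρ)) {n : ℕ} (x : Fin n → G) :
    f (Fin.partialProd x (Fin.last n)) =
      ∑ i : Fin n, ρ (Fin.partialProd x i.castSucc) (f (x i)) := by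
  induction n with
  | zero => simp [Fin.partialProd, cocycle_map_one hf]
  | succ n ih =>
    rw [← Fin.succ_last, Fin.partialProd_succ, cocycle_map_mul hf, Fin.sum_univ_castSucc,
      ← Fin.partialProd_init, ih]
    simp only [← Fin.partialProd_init, add_left_inj]
    rfl

/-- The subgroup on which the cocycle `f` agrees with the coboundary `x ↦ ρ x v - v`. -/
def principalSubgroup (hf : f ∈ cocycles₁ (Rep.of ρ)) (v : A) : Subgroup G where
  carrier := {x | f x = ρ x v - v}
  one_mem' := by simp [cocycle_map_one hf]
  mul_mem' {x y} hx hy := by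
    rw [Set.mem_ofPred_eq] at hx hy ⊢
    simp [cocycle_map_mul hf, hx, hy]
  inv_mem' {x} hx := by
    rw [Set.mem_ofPred_eq] at hx ⊢
    simp [cocycle_map_inv hf, hx]

theorem mem_principalSubgroup {hf : f ∈ cocycles₁ (Rep.of ρ)} {v : A} {x : G} :
    x ∈ principalSubgroup hf v ↔ f x = ρ x v - v :=
  Iff.rfl

theorem exists_mem_principalSubgroup_of_isConj (hf : f ∈ cocycles₁ (Rep.of ρ)) {x y : G}
    (hxy : IsConj x y) {v : A} (hx : x ∈ principalSubgroup hf v) :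
    ∃ v', y ∈ principalSubgroup hf v' := by
  obtain ⟨h, rfl⟩ := isConj_iff.1 hxy
  refine ⟨ρ h v - f h, ?_⟩
  rw [mem_principalSubgroup] at hx ⊢
  simp only [cocycle_map_mul hf, cocycle_map_inv hf, hx, map_mul, map_neg, map_sub,
    Module.End.mul_apply, Representation.inv_self_apply]
  abel

theorem mem_coboundaries₁_of_iff {A : Type u} [AddCommGroup A] [Module k A]
    {ρ : Representation k G A} {f : G → A} :
    f ∈ coboundaries₁ (Rep.of ρ) ↔ ∃ v, ∀ x, f x = ρ x v - v :=
  exists_congr fun _ => funext_iff.trans (forall_congr' fun _ => eq_comm)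

end Cocycles

section AffineExtension

variable {k G A : Type u} [CommRing k] [Group G] [AddCommGroup A] [Module k A]

/-- A representation as an action of `G` by automorphisms of the multiplicative copy of `A`. -/
def actionByMulAut (ρ : Representation k G A) : G →* MulAut (Multiplicative A) where
  toFun x := AddEquiv.toMultiplicative
    { toFun := ρ x
      invFun := ρ x⁻¹
      left_inv := ρ.inv_self_apply x
      right_inv := ρ.self_inv_apply x
      map_add' := map_add _ }
  map_one' := by ext; simp
  map_mul' _ _ := by ext; simp

@[simp]
theorem toAdd_actionByMulAut_apply (ρ : Representation k G A) (x : G) (a : Multiplicative A) :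
    (actionByMulAut ρ x a).toAdd = ρ x a.toAdd :=
  rfl

/-- The semidirect product `A ⋊ G`; its sections over `G` are the cocycles of `ρ`. -/
abbrev AffineExtension (ρ : Representation k G A) : Type u :=
  Multiplicative A ⋊[actionByMulAut ρ] G

namespace AffineExtension

variable {ρ : Representation k G A}

theorem left_mem_cocycles₁ :
    (fun x : AffineExtension ρ => x.left.toAdd) ∈
      cocycles₁ (Rep.of (ρ.comp SemidirectProduct.rightHom)) :=
  mem_cocycles₁_of_iff.2 fun _ _ => rfl

theorem left_comp_mem_cocycles₁ {Ψ : G →* AffineExtension ρ}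
    (hΨ : SemidirectProduct.rightHom.comp Ψ = MonoidHom.id G) :
    (fun x => (Ψ x).left.toAdd) ∈ cocycles₁ (Rep.of ρ) := by
  refine mem_cocycles₁_of_iff.2 fun x y => ?_
  have hx : (Ψ x).right = x := DFunLike.congr_fun hΨ x
  rw [map_mul, SemidirectProduct.mul_left, toAdd_mul, hx]
  rfl

theorem pow_eq_one {x : AffineExtension ρ} {v : A} {n : ℕ}
    (hx : x.left.toAdd = ρ x.right v - v) (hn : x.right ^ n = 1) : x ^ n = 1 := by
  have hpow : x ^ n ∈ principalSubgroup left_mem_cocycles₁ v :=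
    pow_mem (show x ∈ principalSubgroup left_mem_cocycles₁ v from hx) n
  have hright : (x ^ n).right = 1 := (map_pow SemidirectProduct.rightHom x n).trans hn
  refine SemidirectProduct.ext (Multiplicative.toAdd.injective ?_) hright
  simpa [hright] using mem_principalSubgroup.1 hpow

end AffineExtension

end AffineExtension

theorem exists_eq_mul_of_forall_sum_smul {R ι : Type*} [Ring R] [Fintype ι] {a b : ι → R}
    (h : ∀ w : ι → (ι → R) ⧸ Submodule.span R {b}, ∑ i, b i • w i = 0 → ∑ i, a i • w i = 0) :
    ∃ c, ∀ i, a i = c * b i := by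
  classical
  -- Test `h` on the images in `Rⁿ ⧸ R ∙ b` of the standard basis vectors.
  let π := (Submodule.span R {b}).mkQ
  have hsum (d : ι → R) : ∑ i, d i • π (Pi.single i 1) = π d := by
    simp only [← map_smul, ← map_sum, ← pi_eq_sum_univ' d]
  have hπ (d : ι → R) : π d = 0 ↔ d ∈ Submodule.span R {b} := Submodule.Quotient.mk_eq_zero _
  have hb : π b = 0 := (hπ b).2 (Submodule.mem_span_singleton_self b)
  have ha : π a = 0 := (hsum a).symm.trans (h _ ((hsum b).trans hb))
  obtain ⟨c, hc⟩ := Submodule.mem_span_singleton.1 ((hπ a).1 ha)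
  exact ⟨c, fun i => (congrFun hc i).symm⟩

section GroupRing

open MonoidAlgebra (of of_apply)

variable {k G : Type u} [CommRing k] [Group G]

variable (k G) in
/-- The group ring with `x` acting by right multiplication by `x⁻¹`. It commutes with left
multiplication, so its cocycles can be paired with elements of left `k[G]`-modules. -/
noncomputable def rightRegular : Representation k G k[G] where
  toFun x := LinearMap.mulRight k (of k G x⁻¹)
  map_one' := LinearMap.ext fun u => by simp [-of_apply]
  map_mul' x y := LinearMap.ext fun u => by simp [mul_assoc, -of_apply]

@[simp]
theorem rightRegular_apply (x : G) (u : k[G]) : rightRegular k G x u = u * of k G x⁻¹ :=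
  rfl

variable {M : Type*} [AddCommGroup M] [Module k M] [Module k[G] M] [IsScalarTower k k[G] M]

theorem ofModule'_apply (x : G) (a : M) :
    Representation.ofModule' (k := k) M x a = of k G x • a := by
  simp [Representation.ofModule']

theorem exists_linearMap_of_cocycle {f : G → M}
    (hf : f ∈ cocycles₁ (Rep.of (Representation.ofModule' (k := k) (G := G) M))) :
    ∃ Φ : k[G] →ₗ[k] M, ∀ u x, Φ (u * (of k G x - 1)) = u • f x := by
  let Φ : k[G] →ₗ[k] M :=
    Finsupp.linearCombination k f ∘ₗ (MonoidAlgebra.coeffLinearEquiv k).toLinearMap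
  refine ⟨Φ, fun u x => ?_⟩
  have hΦ (y : G) : Φ (of k G y) = f y := by simp [Φ]
  induction u using MonoidAlgebra.induction_on with
  | of y =>
    rw [mul_sub, mul_one, map_sub, ← map_mul, hΦ, hΦ, cocycle_map_mul hf]
    simp [ofModule'_apply]
  | add u v hu hv => rw [add_mul, map_add, hu, hv, add_smul]
  | smul r u hu => rw [smul_mul_assoc, map_smul, hu, smul_assoc]

end GroupRing

/-- Indices of the standard generators for `g` handles and `n` boundary loops, arranged as in
`surfaceRels`. -/
abbrev SurfaceGenerator (g n : ℕ) : Type := Fin g ⊕ Fin g ⊕ Fin n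

/-- The group with the standard presentation of signature `(g; m₁,…,m_t; s)`. -/
abbrev FuchsianGroup (g t s : ℕ) (m : Fin t → ℕ) : Type :=
  PresentedGroup (surfaceRels g t s m)

namespace SurfaceGenerator

variable {g n : ℕ} {H K : Type*} [Group H] [Group K]

/-- The index of the first loop `αᵢ` of a handle. -/
abbrev α (i : Fin g) : SurfaceGenerator g n := Sum.inl i

/-- The index of the second loop `βᵢ` of a handle. -/
abbrev β (i : Fin g) : SurfaceGenerator g n := Sum.inr (Sum.inl i)

/-- The index of the boundary loop `γⱼ`. -/
abbrev γ (j : Fin n) : SurfaceGenerator g n := Sum.inr (Sum.inr j)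

theorem sum_eq_sum_add_sum {A : Type*} [AddCommMonoid A] (F : SurfaceGenerator g n → A) :
    ∑ e, F e = ∑ i, (F (α i) + F (β i)) + ∑ j, F (γ j) := by
  rw [Fintype.sum_sum_type, Fintype.sum_sum_type, Finset.sum_add_distrib, add_assoc]

/-- The initial segment `[α₁,β₁]⋯[αᵢ,βᵢ]` of the surface word. -/
def handlePrefix (x : SurfaceGenerator g n → H) : Fin (g + 1) → H :=
  Fin.partialProd fun i => ⁅x (α i), x (β i)⁆

/-- The initial segment `[α₁,β₁]⋯[α_g,β_g]γ₁⋯γⱼ` of the surface word. -/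
def boundaryPrefix (x : SurfaceGenerator g n → H) (j : Fin (n + 1)) : H :=
  handlePrefix x (Fin.last g) * Fin.partialProd (fun j => x (γ j)) j

/-- The word `[α₁,β₁]⋯[α_g,β_g]γ₁⋯γₙ`. -/
def surfaceWord (x : SurfaceGenerator g n → H) : H :=
  boundaryPrefix x (Fin.last n)

/-- The mirror image of a system of loops: `αᵢ`, `βᵢ` and `γⱼ` are replaced by conjugates of `βᵢ⁻¹`,
`αᵢ⁻¹` and `γⱼ⁻¹`, chosen so that every initial segment of the surface word is inverted. -/
def reflect (x : SurfaceGenerator g n → H) : SurfaceGenerator g n → H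
  | .inl i => handlePrefix x i.castSucc * (x (α i) * (x (β i))⁻¹ * (x (α i))⁻¹) *
      (handlePrefix x i.castSucc)⁻¹
  | .inr (.inl i) => handlePrefix x i.succ * (x (α i))⁻¹ * (handlePrefix x i.castSucc)⁻¹
  | .inr (.inr j) => boundaryPrefix x j.castSucc * (x (γ j))⁻¹ * (boundaryPrefix x j.castSucc)⁻¹

variable (x : SurfaceGenerator g n → H)

theorem handlePrefix_zero : handlePrefix x 0 = 1 := Fin.partialProd_zero _

theorem handlePrefix_succ (i : Fin g) :
    handlePrefix x i.succ = handlePrefix x i.castSucc * ⁅x (α i), x (β i)⁆ :=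
  Fin.partialProd_succ _ i

theorem boundaryPrefix_zero : boundaryPrefix x 0 = handlePrefix x (Fin.last g) := by
  rw [boundaryPrefix, Fin.partialProd_zero, mul_one]

theorem boundaryPrefix_succ (j : Fin n) :
    boundaryPrefix x j.succ = boundaryPrefix x j.castSucc * x (γ j) := by
  rw [boundaryPrefix, Fin.partialProd_succ, ← mul_assoc, boundaryPrefix]

theorem surfaceWord_eq_prod_ofFn :
    surfaceWord x = (List.ofFn fun i => ⁅x (α i), x (β i)⁆).prod *
      (List.ofFn fun j => x (γ j)).prod := by
  simp [surfaceWord, boundaryPrefix, handlePrefix, Fin.partialProd, List.take_of_length_le]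

theorem map_handlePrefix (φ : H →* K) (i : Fin (g + 1)) :
    φ (handlePrefix x i) = handlePrefix (φ ∘ x) i := by
  induction i using Fin.induction with
  | zero => simp [handlePrefix_zero]
  | succ i ih => simp [handlePrefix_succ, ih, commutatorElement_def]

theorem map_boundaryPrefix (φ : H →* K) (j : Fin (n + 1)) :
    φ (boundaryPrefix x j) = boundaryPrefix (φ ∘ x) j := by
  induction j using Fin.induction with
  | zero => simp [boundaryPrefix_zero, map_handlePrefix]
  | succ j ih => simp [boundaryPrefix_succ, ih]

theorem map_surfaceWord (φ : H →* K) : φ (surfaceWord x) = surfaceWord (φ ∘ x) :=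
  map_boundaryPrefix x φ _

theorem comp_reflect (φ : H →* K) : φ ∘ reflect x = reflect (φ ∘ x) := by
  ext (i | i | j) <;> simp [reflect, map_handlePrefix, map_boundaryPrefix]

theorem handlePrefix_reflect (i : Fin (g + 1)) :
    handlePrefix (reflect x) i = (handlePrefix x i)⁻¹ := by
  induction i using Fin.induction with
  | zero => simp [handlePrefix_zero]
  | succ i ih =>
    simp only [handlePrefix_succ, reflect, commutatorElement_def, ih]
    group

theorem boundaryPrefix_reflect (j : Fin (n + 1)) :
    boundaryPrefix (reflect x) j = (boundaryPrefix x j)⁻¹ := by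
  induction j using Fin.induction with
  | zero => simp [boundaryPrefix_zero, handlePrefix_reflect]
  | succ j ih => simp [boundaryPrefix_succ, reflect, ih, mul_assoc]

theorem surfaceWord_reflect : surfaceWord (reflect x) = (surfaceWord x)⁻¹ :=
  boundaryPrefix_reflect x _

theorem reflect_reflect : reflect (reflect x) = x := by
  ext (i | i | j)
  · simp only [reflect, handlePrefix_reflect, handlePrefix_succ, commutatorElement_def]
    group
  · simp only [reflect, handlePrefix_reflect, handlePrefix_succ, commutatorElement_def]
    group
  · simp only [reflect, boundaryPrefix_reflect]
    group

theorem reflect_boundary_pow_eq_one {x : SurfaceGenerator g n → H} {j : Fin n} {r : ℕ}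
    (h : x (γ j) ^ r = 1) : reflect x (γ j) ^ r = 1 := by
  simp [reflect, conj_pow, h]

section CocycleReflect

variable {k G : Type u} {A : Type*} [CommRing k] [Group G] [AddCommGroup A] [Module k A]
  {ρ : Representation k G A} {f : G → A}

theorem cocycle_map_surfaceWord (hf : f ∈ cocycles₁ (Rep.of ρ)) (y : SurfaceGenerator g n → G) :
    f (surfaceWord y) = ∑ i : Fin g, ρ (handlePrefix y i.castSucc) (f ⁅y (α i), y (β i)⁆) +
      ∑ j : Fin n, ρ (boundaryPrefix y j.castSucc) (f (y (γ j))) := by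
  rw [surfaceWord, boundaryPrefix, cocycle_map_mul hf, handlePrefix, cocycle_map_partialProd hf,
    cocycle_map_partialProd hf, map_sum]
  simp only [boundaryPrefix, handlePrefix, map_mul, Module.End.mul_apply]

variable (ρ) in
/-- The cochain dual to `w`, given by its values on the mirror images of the system `y`. They are
chosen so that a cocycle with these values takes the value `∑ e, (ρ (y e)⁻¹ (w e) - w e)` on the
surface word of the mirror images, and is principal on those of the boundary loops. -/
def dualCochain (y : SurfaceGenerator g n → G) (w : SurfaceGenerator g n → A) :
    SurfaceGenerator g n → A
  | .inl i => -ρ (handlePrefix y i.castSucc) (w (α i))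
  | .inr (.inl i) => ρ (handlePrefix y i.succ) (w (β i))
  | .inr (.inr j) => ρ (reflect y (γ j)) (ρ (boundaryPrefix y j.castSucc) (w (γ j))) -
      ρ (boundaryPrefix y j.castSucc) (w (γ j))

theorem cocycle_map_commutator_reflect (hf : f ∈ cocycles₁ (Rep.of ρ))
    {y : SurfaceGenerator g n → G} {w : SurfaceGenerator g n → A}
    (h : ∀ e, f (reflect y e) = dualCochain ρ y w e) (i : Fin g) :
    ρ (handlePrefix (reflect y) i.castSucc) (f ⁅reflect y (α i), reflect y (β i)⁆) =
      (ρ (y (α i))⁻¹ (w (α i)) - w (α i)) + (ρ (y (β i))⁻¹ (w (β i)) - w (β i)) := by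
  simp only [cocycle_map_commutator hf, h, dualCochain, map_sub, map_add, map_neg,
    ← Module.End.mul_apply, ← map_mul]
  simp only [handlePrefix_reflect, reflect, handlePrefix_succ, commutatorElement_def]
  simp only [inv_mul_cancel, map_one, Module.End.one_apply, mul_assoc, inv_mul_cancel_left,
    mul_inv_cancel_left, mul_inv_rev, inv_inv, mul_one, sub_neg_eq_add, mul_inv_cancel]
  abel

theorem map_dualCochain_boundary (y : SurfaceGenerator g n → G) (w : SurfaceGenerator g n → A)
    (j : Fin n) :
    ρ (boundaryPrefix (reflect y) j.castSucc) (dualCochain ρ y w (γ j)) =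
      ρ (y (γ j))⁻¹ (w (γ j)) - w (γ j) := by
  simp only [dualCochain, map_sub, ← Module.End.mul_apply, ← map_mul]
  simp [boundaryPrefix_reflect, reflect, mul_assoc]

theorem cocycle_map_surfaceWord_reflect (hf : f ∈ cocycles₁ (Rep.of ρ))
    {y : SurfaceGenerator g n → G} {w : SurfaceGenerator g n → A}
    (h : ∀ e, f (reflect y e) = dualCochain ρ y w e) :
    f (surfaceWord (reflect y)) = ∑ e, (ρ (y e)⁻¹ (w e) - w e) := by
  simp only [cocycle_map_surfaceWord hf, cocycle_map_commutator_reflect hf h,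
    h, map_dualCochain_boundary, sum_eq_sum_add_sum]

theorem dualCochain_comp {H : Type u} [Group H] (φ : H →* G) (y : SurfaceGenerator g n → H)
    (w : SurfaceGenerator g n → A) : dualCochain (ρ.comp φ) y w = dualCochain ρ (φ ∘ y) w := by
  ext (i | i | j) <;>
    simp [dualCochain, map_handlePrefix, map_boundaryPrefix, ← comp_reflect]

end CocycleReflect

section Presentation

variable {g t s : ℕ} {m : Fin t → ℕ} {H : Type*} [Group H]

theorem lift_surfaceRels_eq_one {x : SurfaceGenerator g (t + s) → H}
    (htorsion : ∀ i, x (γ (Fin.castAdd s i)) ^ m i = 1) (hword : surfaceWord x = 1) :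
    ∀ r ∈ surfaceRels g t s m, FreeGroup.lift x r = 1 := by
  rintro r (⟨i, rfl⟩ | rfl)
  · simpa using htorsion i
  · rw [← hword, surfaceWord_eq_prod_ofFn]
    simp [map_list_prod, List.map_ofFn, Function.comp_def, commutatorElement_def]

theorem surfaceWord_of :
    surfaceWord (PresentedGroup.of : _ → FuchsianGroup g t s m) = 1 := by
  change surfaceWord (PresentedGroup.mk (surfaceRels g t s m) ∘ FreeGroup.of) = 1
  rw [← map_surfaceWord]
  refine PresentedGroup.one_of_mem (Or.inr ?_)
  simp [surfaceWord_eq_prod_ofFn, commutatorElement_def]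

theorem of_torsion_pow (i : Fin t) :
    (PresentedGroup.of (γ (Fin.castAdd s i)) : FuchsianGroup g t s m) ^ m i = 1 :=
  PresentedGroup.one_of_mem (Or.inl ⟨i, rfl⟩)

end Presentation

section DualCocycle

open SemidirectProduct (rightHom)

variable {g t s : ℕ} {m : Fin t → ℕ} {k A : Type} [CommRing k] [AddCommGroup A] [Module k A]
  {ρ : Representation k (FuchsianGroup g t s m) A}

theorem exists_cocycle_reflect_eq_dualCochain {w : SurfaceGenerator g (t + s) → A}
    (hw : ∑ e, (ρ (PresentedGroup.of e)⁻¹ (w e) - w e) = 0) :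
    ∃ f ∈ cocycles₁ (Rep.of ρ),
      ∀ e, f (reflect PresentedGroup.of e) = dualCochain ρ PresentedGroup.of w e := by
  let X (e : SurfaceGenerator g (t + s)) : AffineExtension ρ :=
    ⟨.ofAdd (dualCochain ρ PresentedGroup.of w e), reflect PresentedGroup.of e⟩
  have hright : rightHom ∘ reflect X = PresentedGroup.of := by
    rw [comp_reflect]
    exact reflect_reflect _
  have hword : surfaceWord X = 1 := by
    refine SemidirectProduct.ext (Multiplicative.toAdd.injective ?_) ?_
    · have hX := cocycle_map_surfaceWord_reflect (y := reflect X) (w := w)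
        AffineExtension.left_mem_cocycles₁ fun e => by
          rw [dualCochain_comp, hright, reflect_reflect]
          rfl
      rw [reflect_reflect] at hX
      refine hX.trans (Eq.trans ?_ hw)
      refine Finset.sum_congr rfl fun e _ => ?_
      rw [← hright]
      rfl
    · exact (map_surfaceWord X rightHom).trans <|
        (surfaceWord_reflect _).trans (inv_eq_one.2 surfaceWord_of)
  have htorsion (i : Fin t) : X (γ (Fin.castAdd s i)) ^ m i = 1 :=
    AffineExtension.pow_eq_one rfl (reflect_boundary_pow_eq_one (of_torsion_pow i))
  let Ψ : FuchsianGroup g t s m →* AffineExtension ρ :=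
    PresentedGroup.toGroup (lift_surfaceRels_eq_one (x := reflect X)
      (fun i => reflect_boundary_pow_eq_one (htorsion i))
      (by rw [surfaceWord_reflect, hword, inv_one]))
  have hΨ : Ψ ∘ PresentedGroup.of = reflect X := funext fun e => PresentedGroup.toGroup.of _
  refine ⟨_, AffineExtension.left_comp_mem_cocycles₁ (Ψ := Ψ) ?_, fun e => ?_⟩
  · refine PresentedGroup.ext fun e => ?_
    exact (congrArg rightHom (congrFun hΨ e)).trans (congrFun hright e)
  · change (Ψ (reflect PresentedGroup.of e)).left.toAdd = _
    rw [← Function.comp_apply (f := Ψ), comp_reflect, hΨ, reflect_reflect]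
    rfl

end DualCocycle

section Pairing

open MonoidAlgebra (of of_apply)

variable {k G : Type u} [CommRing k] [Group G] {M : Type*} [AddCommGroup M] [Module k M]
  [Module k[G] M] [IsScalarTower k k[G] M]

variable {D : G → k[G]}

theorem cocycle_commutator_mul_handlePrefix_inv
    (hD : D ∈ cocycles₁ (Rep.of (rightRegular k G))) (y : SurfaceGenerator g n → G) (i : Fin g) :
    D ⁅y (α i), y (β i)⁆ * of k G (handlePrefix y i.castSucc)⁻¹ =
      D (y (β i)) * of k G (handlePrefix y i.succ)⁻¹ * (of k G (reflect y (β i)) - 1) -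
        D (y (α i)) * of k G (handlePrefix y i.castSucc)⁻¹ * (of k G (reflect y (α i)) - 1) := by
  rw [cocycle_map_commutator hD]
  simp only [rightRegular_apply, reflect, handlePrefix_succ, commutatorElement_def, add_mul,
    sub_mul, mul_sub, mul_assoc, ← map_mul, mul_one]
  simp only [map_mul, mul_inv_rev, inv_inv, mul_assoc, inv_mul_cancel_left, mul_inv_cancel_left]
  abel

theorem principal_boundary_mul_boundaryPrefix_inv {y : SurfaceGenerator g n → G} {j : Fin n}
    {v : k[G]} (h : D (y (γ j)) = rightRegular k G (y (γ j)) v - v) :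
    D (y (γ j)) * of k G (boundaryPrefix y j.castSucc)⁻¹ =
      v * of k G (boundaryPrefix y j.castSucc)⁻¹ * (of k G (reflect y (γ j)) - 1) := by
  simp only [h, rightRegular_apply, reflect, sub_mul, mul_sub, mul_assoc, ← map_mul]
  simp [-of_apply]

variable {f : G → M} {y : SurfaceGenerator g n → G} {w : SurfaceGenerator g n → M}
  {Φ : k[G] →ₗ[k] M}

theorem linearMap_commutator_mul_handlePrefix_inv
    (hD : D ∈ cocycles₁ (Rep.of (rightRegular k G)))
    (hΦ : ∀ u e, Φ (u * (of k G (reflect y e) - 1)) =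
      u • dualCochain (Representation.ofModule' (k := k) M) y w e) (i : Fin g) :
    Φ (D ⁅y (α i), y (β i)⁆ * of k G (handlePrefix y i.castSucc)⁻¹) =
      D (y (α i)) • w (α i) + D (y (β i)) • w (β i) := by
  rw [cocycle_commutator_mul_handlePrefix_inv hD, map_sub, hΦ, hΦ]
  simp only [dualCochain, ofModule'_apply, smul_neg, smul_smul, mul_assoc, ← map_mul]
  simp [add_comm, -of_apply]

theorem linearMap_boundary_mul_boundaryPrefix_inv {j : Fin n}
    (hγ : ∃ v, D (y (γ j)) = rightRegular k G (y (γ j)) v - v)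
    (hΦ : ∀ u e, Φ (u * (of k G (reflect y e) - 1)) =
      u • dualCochain (Representation.ofModule' (k := k) M) y w e) :
    Φ (D (y (γ j)) * of k G (boundaryPrefix y j.castSucc)⁻¹) = D (y (γ j)) • w (γ j) := by
  obtain ⟨v, hv⟩ := hγ
  simp only [principal_boundary_mul_boundaryPrefix_inv hv, hΦ, dualCochain, ofModule'_apply,
    smul_smul]
  simp only [hv, rightRegular_apply, reflect, mul_assoc, smul_sub, smul_smul, sub_smul, ← map_mul]
  simp [-of_apply]

theorem linearMap_cocycle_surfaceWord (hD : D ∈ cocycles₁ (Rep.of (rightRegular k G)))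
    (hγ : ∀ j, ∃ v, D (y (γ j)) = rightRegular k G (y (γ j)) v - v)
    (hΦ : ∀ u e, Φ (u * (of k G (reflect y e) - 1)) =
      u • dualCochain (Representation.ofModule' (k := k) M) y w e) :
    Φ (D (surfaceWord y)) = ∑ e, D (y e) • w e := by
  simp only [cocycle_map_surfaceWord hD, rightRegular_apply, map_add, map_sum, sum_eq_sum_add_sum,
    linearMap_commutator_mul_handlePrefix_inv hD hΦ,
    linearMap_boundary_mul_boundaryPrefix_inv (hγ _) hΦ]

end Pairing

section Rigidity

open MonoidAlgebra (of)

variable {g t s : ℕ} {m : Fin t → ℕ} {k : Type} [CommRing k]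

variable {D : FuchsianGroup g t s m → k[FuchsianGroup g t s m]}

theorem sum_cocycle_smul_eq_zero
    (hD : D ∈ cocycles₁ (Rep.of (rightRegular k (FuchsianGroup g t s m))))
    (hγ : ∀ j, ∃ v,
      D (PresentedGroup.of (γ j)) = rightRegular k _ (PresentedGroup.of (γ j)) v - v)
    {M : Type} [AddCommGroup M] [Module k M] [Module k[FuchsianGroup g t s m] M]
    [IsScalarTower k k[FuchsianGroup g t s m] M]
    {w : SurfaceGenerator g (t + s) → M}
    (hw : ∑ e, (of k (FuchsianGroup g t s m) (PresentedGroup.of e)⁻¹ - 1) • w e = 0) :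
    ∑ e, D (PresentedGroup.of e) • w e = 0 := by
  obtain ⟨f, hf, hfw⟩ := exists_cocycle_reflect_eq_dualCochain
    (ρ := Representation.ofModule' (k := k) (G := FuchsianGroup g t s m) M) (w := w)
    (by simpa only [ofModule'_apply, sub_smul, one_smul] using hw)
  obtain ⟨Φ, hΦ⟩ := exists_linearMap_of_cocycle hf
  rw [← linearMap_cocycle_surfaceWord hD hγ fun u e => (hΦ u _).trans (congrArg _ (hfw e)),
    surfaceWord_of, cocycle_map_one hD, map_zero]

theorem mem_coboundaries₁_of_principal_boundary
    (hD : D ∈ cocycles₁ (Rep.of (rightRegular k (FuchsianGroup g t s m))))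
    (hγ : ∀ j, ∃ v,
      D (PresentedGroup.of (γ j)) = rightRegular k _ (PresentedGroup.of (γ j)) v - v) :
    D ∈ coboundaries₁ (Rep.of (rightRegular k (FuchsianGroup g t s m))) := by
  obtain ⟨v, hv⟩ := exists_eq_mul_of_forall_sum_smul fun w hw =>
    sum_cocycle_smul_eq_zero (w := w) hD hγ hw
  have htop : principalSubgroup hD v = ⊤ := by
    rw [eq_top_iff, ← PresentedGroup.closure_range_of, Subgroup.closure_le]
    rintro _ ⟨e, rfl⟩
    exact mem_principalSubgroup.2 ((hv e).trans (by rw [mul_sub, mul_one, rightRegular_apply]))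
  exact mem_coboundaries₁_of_iff.2
    ⟨v, fun x => mem_principalSubgroup.1 (htop ▸ Subgroup.mem_top x)⟩

end Rigidity

end SurfaceGenerator

section Coprod

open Monoid.Coprod (inl inr)
open MonoidAlgebra (of of_apply)

variable {Γ₁ Γ₂ : Type*} [Group Γ₁] [Group Γ₂]

theorem exists_hom_perm_fixing_inl_mul_inr {x : Γ₁} {y : Γ₂} (hx : x ≠ 1) (hy : y ≠ 1) :
    ∃ (χ : Monoid.Coprod Γ₁ Γ₂ →* Equiv.Perm (Γ₁ × Γ₂)) (p : Γ₁ × Γ₂),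
      χ (inl x * inr y) p = p ∧ χ (inr y) p ≠ p := by
  -- Conjugated by `τ`, the regular action of `y` moves `(x, 1)` to `(1, 1)`, and `x` moves it back.
  obtain ⟨τ, hτ₁ : τ (1, 1) = (x, 1), hτy : τ (1, y) = (1, 1)⟩ :=
    MulAction.is_two_pretransitive_iff.1 (Equiv.Perm.isMultiplyPretransitive (Γ₁ × Γ₂) 2)
      (show ((1, 1) : Γ₁ × Γ₂) ≠ (1, y) from fun h => hy (congrArg Prod.snd h).symm)
      (show ((x, 1) : Γ₁ × Γ₂) ≠ (1, 1) from fun h => hx (congrArg Prod.fst h))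
  let regular := MulAction.toPermHom (Γ₁ × Γ₂) (Γ₁ × Γ₂)
  let χ : Monoid.Coprod Γ₁ Γ₂ →* Equiv.Perm (Γ₁ × Γ₂) := Monoid.Coprod.lift
    (regular.comp (MonoidHom.inl Γ₁ Γ₂))
    ((MulAut.conj τ).toMonoidHom.comp (regular.comp (MonoidHom.inr Γ₁ Γ₂)))
  have hinr : χ (inr y) (x, 1) = (1, 1) := by simp [χ, regular, ← hτ₁, Prod.mul_def, hτy]
  refine ⟨χ, (x, 1), ?_, ?_⟩
  · rw [map_mul, Equiv.Perm.mul_apply, hinr]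
    simp [χ, regular, Prod.mul_def]
  · rw [hinr]
    exact fun h => hx (congrArg Prod.fst h).symm

theorem perm_apply_eq_of_sub_one_eq_mul {k G X : Type*} [CommRing k] [Nontrivial k] [Group G]
    {x y : G} {u : k[G]} (h : of k G x - 1 = u * (of k G y - 1)) (χ : G →* Equiv.Perm X) {p : X}
    (hp : χ y p = p) : χ x p = p := by
  let ρ : Representation k G k[X] := (Representation.ofMulAction k (Equiv.Perm X) X).comp χ
  have hρ (z : G) : ρ.asAlgebraHom (of k G z - 1) (.single p 1) =
      .single (χ z p) 1 - .single p 1 := by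
    rw [map_sub, map_one, LinearMap.sub_apply, Representation.asAlgebraHom_of]
    exact congrArg (· - _) (Representation.ofMulAction_single (χ z) p 1)
  have hx : ρ.asAlgebraHom (of k G x - 1) (.single p 1) = 0 := by
    rw [h, map_mul, Module.End.mul_apply, hρ, hp, sub_self, map_zero]
  rw [hρ, sub_eq_zero] at hx
  exact MonoidAlgebra.single_left_injective one_ne_zero hx

variable {k G : Type u} [CommRing k] [Group G]

theorem exists_cocycle_of_coprod {A : Type u} [AddCommGroup A] [Module k A]
    (φ : G ≃* Monoid.Coprod Γ₁ Γ₂) (ρ : Representation k G A) (v : A) :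
    ∃ f ∈ cocycles₁ (Rep.of ρ), (∀ x, f (φ.symm (inl x)) = 0) ∧
      ∀ y, f (φ.symm (inr y)) = ρ (φ.symm (inr y)) v - v := by
  let S : Monoid.Coprod Γ₁ Γ₂ →* AffineExtension ρ :=
    SemidirectProduct.inr.comp φ.symm.toMonoidHom
  let translate : AffineExtension ρ := SemidirectProduct.inl (.ofAdd (-v))
  let Ψ : Monoid.Coprod Γ₁ Γ₂ →* AffineExtension ρ := Monoid.Coprod.lift
    (S.comp inl) ((MulAut.conj translate).toMonoidHom.comp (S.comp inr))
  have hΨ : SemidirectProduct.rightHom.comp Ψ = φ.symm.toMonoidHom :=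
    Monoid.Coprod.hom_ext (by ext; simp [Ψ, S]) (by ext; simp [Ψ, S, translate])
  refine ⟨fun x => (Ψ (φ x)).left.toAdd,
    AffineExtension.left_comp_mem_cocycles₁ (Ψ := Ψ.comp φ.toMonoidHom) ?_, fun x => ?_,
    fun y => ?_⟩
  · rw [← MonoidHom.comp_assoc, hΨ]
    ext; simp
  · simp [Ψ, S]
  · have hy : Ψ (inr y) = translate * S (inr y) * translate⁻¹ := Monoid.Coprod.lift_apply_inr _ _ y
    simp [hy, S, translate, neg_add_eq_sub]

theorem subsingleton_or_subsingleton_of_mem_coboundaries₁ [Nontrivial k]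
    {φ : G ≃* Monoid.Coprod Γ₁ Γ₂} {f : G → k[G]}
    (hf : f ∈ coboundaries₁ (Rep.of (rightRegular k G))) (hinl : ∀ x, f (φ.symm (inl x)) = 0)
    (hinr : ∀ y, f (φ.symm (inr y)) = rightRegular k G (φ.symm (inr y)) 1 - 1) :
    Subsingleton Γ₁ ∨ Subsingleton Γ₂ := by
  obtain ⟨v, hv⟩ := mem_coboundaries₁_of_iff.1 hf
  by_contra! ⟨_, _⟩
  obtain ⟨x, hx⟩ := exists_ne (1 : Γ₁)
  obtain ⟨y, hy⟩ := exists_ne (1 : Γ₂)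
  have hvx : v * of k G (φ.symm (inl x)) = v := by
    simpa [hv, sub_eq_zero, -of_apply] using hinl x⁻¹
  have hvy : v * of k G (φ.symm (inr y)) - v = of k G (φ.symm (inr y)) - 1 := by
    simpa [hv, -of_apply] using hinr y⁻¹
  have h : of k G (φ.symm (inr y)) - 1 = v * (of k G (φ.symm (inl x * inr y)) - 1) := by
    rw [map_mul, map_mul, mul_sub, mul_one, ← mul_assoc, hvx, hvy]
  obtain ⟨χ, p, hfix, hmove⟩ := exists_hom_perm_fixing_inl_mul_inr hx hy
  exact hmove (by simpa using
    perm_apply_eq_of_sub_one_eq_mul h (χ.comp φ.toMonoidHom) (by simpa using hfix))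

end Coprod

theorem isFreeProductOfCyclicGroups_of_subsingleton {H : Type*} [Group H] (_ : Subsingleton H) :
    IsFreeProductOfCyclicGroups H := by
  let _ : Unique H := uniqueOfSubsingleton 1
  have : Subsingleton (Monoid.CoprodI fun _ : Empty => Unit) := by
    refine subsingleton_of_forall_eq 1 fun w => ?_
    exact DFunLike.congr_fun (Monoid.CoprodI.ext_hom (.id _) 1 fun i => i.elim) w
  let _ : Unique (Monoid.CoprodI fun _ : Empty => Unit) := uniqueOfSubsingleton 1
  exact ⟨Empty, fun _ => Unit, fun _ => inferInstance, fun i => i.elim, ⟨.ofUnique⟩⟩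

theorem free_product_factor_is_free_product_of_cyclics_general
    {g t s : ℕ} {m : Fin t → ℕ} {Γ₁ Γ₂ : Type*} [Group Γ₁] [Group Γ₂]
    (φ : PresentedGroup (surfaceRels g t s m) ≃* Monoid.Coprod Γ₁ Γ₂)
    (hγ : ∀ j : Fin (t + s),
      (∃ x : Γ₁, IsConj (Monoid.Coprod.inl x) (φ (PresentedGroup.of (Sum.inr (Sum.inr j))))) ∨
      (∃ y : Γ₂, IsConj (Monoid.Coprod.inr y) (φ (PresentedGroup.of (Sum.inr (Sum.inr j)))))) :
    Subsingleton Γ₁ ∨ Subsingleton Γ₂ := by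
  obtain ⟨D, hD, hinl, hinr⟩ := exists_cocycle_of_coprod φ (rightRegular ℤ _) 1
  refine subsingleton_or_subsingleton_of_mem_coboundaries₁
    (SurfaceGenerator.mem_coboundaries₁_of_principal_boundary hD fun j => ?_) hinl hinr
  rcases hγ j with ⟨x, hx⟩ | ⟨y, hy⟩
  · exact exists_mem_principalSubgroup_of_isConj hD (v := 0)
      (by simpa using φ.symm.toMonoidHom.map_isConj hx) ((hinl x).trans (by simp))
  · exact exists_mem_principalSubgroup_of_isConj hD
      (by simpa using φ.symm.toMonoidHom.map_isConj hy) (hinr y)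

/-- Suppose `Γ ≅ Γ₁ * Γ₂` is a free product and `Γ` has the standard
presentation of a Fuchsian group of signature `(g; m₁,…,m_t; s)`, with each generator
`γᵢ` lying in `Γ₁` or `Γ₂` (under the free product decomposition).  Then `Γ₁` or `Γ₂`
is isomorphic to a free product of cyclic groups. -/
theorem free_product_factor_is_free_product_of_cyclics
    (g t s : ℕ) (m : Fin t → ℕ) (hm : ∀ i, 2 ≤ m i)
    (Γ Γ₁ Γ₂ : Type*) [Group Γ] [Group Γ₁] [Group Γ₂]
    (e : Γ ≃* PresentedGroup (surfaceRels g t s m))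
    (ψ : Γ ≃* Monoid.Coprod Γ₁ Γ₂)
    (hγ : ∀ i : Fin (t + s),
      (∃ x : Γ₁, ψ (e.symm (PresentedGroup.of (Sum.inr (Sum.inr i)))) = Monoid.Coprod.inl x) ∨
      (∃ x : Γ₂, ψ (e.symm (PresentedGroup.of (Sum.inr (Sum.inr i)))) = Monoid.Coprod.inr x)) :
    IsFreeProductOfCyclicGroups Γ₁ ∨ IsFreeProductOfCyclicGroups Γ₂ := by
  refine (free_product_factor_is_free_product_of_cyclics_general (e.symm.trans ψ) fun j => ?_).imp
    isFreeProductOfCyclicGroups_of_subsingleton isFreeProductOfCyclicGroups_of_subsingleton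
  exact (hγ j).imp (fun ⟨x, hx⟩ => ⟨x, hx ▸ .refl _⟩) (fun ⟨y, hy⟩ => ⟨y, hy ▸ .refl _⟩)
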